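/- For every d∈(0,1] there exists a function φ̄_d∈C²((0,d))∩C¹([0,d]) satisfying φ̄_d''(x₂)=f(φ̄_d(x₂)) for x₂∈(0,d), φ̄_d(0)=0, φ̄_d(d)=Q and 0<φ̄_d(x₂)<Q on (0,d); it is unique in this class, and moreover φ̄_d'(x₂)>0 for all x₂∈(0,d). -/

import Mathlib

open Real Set MeasureTheory

noncomputable section

/-- `φ` solves the boundary value problem `φ'' = f(φ)` on `(0,d)`, `φ(0) = 0`,
`φ(d) = Q`, `0 < φ < Q` on `(0,d)`, with `φ ∈ C²((0,d)) ∩ C¹([0,d])`. -/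
def IsBVPSol (Q : ℝ) (f : ℝ → ℝ) (d : ℝ) (φ : ℝ → ℝ) : Prop :=
  ContDiffOn ℝ 1 φ (Set.Icc 0 d) ∧ ContDiffOn ℝ 2 φ (Set.Ioo 0 d) ∧
  (∀ x ∈ Set.Ioo (0 : ℝ) d, deriv (deriv φ) x = f (φ x)) ∧
  φ 0 = 0 ∧ φ d = Q ∧ (∀ x ∈ Set.Ioo (0 : ℝ) d, 0 < φ x ∧ φ x < Q)

/-!
A solution of `φ'' = f(φ)` conserves `φ'² - E(φ)`, where `E' = 2f` and `E(0) = 0`, so along it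
`φ'² = E(φ) + c` with `c = φ'(0)² ≥ 0`. When `E > 0` on `(0, Q)` this forbids turning points: `φ`
increases and is the inverse of the time map `s ↦ ∫₀ˢ du / √(E(u) + c)`. Conversely the inverse of
each such time map is a solution, on an interval of length `∫₀^Q du / √(E(u) + c)`. This length is
continuous and strictly decreasing in `c ≥ 0` and tends to `0`, so every length in `(0, L]`, where
`L` is its value at `c = 0`, is attained for exactly one `c`. In the case at hand the cubic profile
`φ̄₁` is itself the inverse of the time map for `c = 0`, with `E = (φ̄₁' ∘ κ)²`, hence `L = 1`.
-/

open scoped Topology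

section LeftInverse

theorem continuousOn_image_of_leftInvOn_of_isCompact {X Y : Type*} [TopologicalSpace X]
    [TopologicalSpace Y] [T2Space Y] {K : Set X} {g : X → Y} {h : Y → X} (hK : IsCompact K)
    (hg : ContinuousOn g K) (hh : LeftInvOn h g K) : ContinuousOn h (g '' K) := by
  rw [continuousOn_iff_isClosed]
  intro t ht
  have hclosed : IsClosed (g '' (t ∩ K)) :=
    ((hK.inter_left ht).image_of_continuousOn (hg.mono inter_subset_right)).isClosed
  exact ⟨g '' (t ∩ K), hclosed, by rw [hh.image_inter', inter_assoc, inter_self]⟩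

variable {g g' h : ℝ → ℝ} {a b : ℝ}

theorem mapsTo_Ioo_of_leftInvOn (hab : a ≤ b) (hg : ContinuousOn g (Icc a b))
    (hh : LeftInvOn h g (Icc a b)) : MapsTo h (Ioo (g a) (g b)) (Ioo a b) := by
  intro y hy
  obtain ⟨x, hx, rfl⟩ := intermediate_value_Ioo hab hg hy
  rwa [hh (Ioo_subset_Icc_self hx)]

theorem rightInvOn_Icc_of_leftInvOn (hab : a ≤ b) (hg : ContinuousOn g (Icc a b))
    (hh : LeftInvOn h g (Icc a b)) : RightInvOn h g (Icc (g a) (g b)) := by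
  intro y hy
  obtain ⟨x, hx, rfl⟩ := intermediate_value_Icc hab hg hy
  rw [hh hx]

theorem continuousOn_Icc_of_leftInvOn (hab : a ≤ b) (hg : ContinuousOn g (Icc a b))
    (hh : LeftInvOn h g (Icc a b)) : ContinuousOn h (Icc (g a) (g b)) :=
  (continuousOn_image_of_leftInvOn_of_isCompact isCompact_Icc hg hh).mono
    (intermediate_value_Icc hab hg)

theorem hasDerivAt_of_leftInvOn_Icc (hab : a ≤ b) (hg : ContinuousOn g (Icc a b))
    (hg' : ∀ x ∈ Ioo a b, HasDerivAt g (g' x) x) (hne : ∀ x ∈ Ioo a b, g' x ≠ 0)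
    (hh : LeftInvOn h g (Icc a b)) {y : ℝ} (hy : y ∈ Ioo (g a) (g b)) :
    HasDerivAt h (g' (h y))⁻¹ y := by
  have hhy : h y ∈ Ioo a b := mapsTo_Ioo_of_leftInvOn hab hg hh hy
  have hnhds : Icc (g a) (g b) ∈ 𝓝 y := Icc_mem_nhds hy.1 hy.2
  exact ((hg' _ hhy).of_local_left_inverse
    ((continuousOn_Icc_of_leftInvOn hab hg hh).continuousAt hnhds) (hne _ hhy)
    (Filter.eventually_of_mem hnhds (rightInvOn_Icc_of_leftInvOn hab hg hh)))

end LeftInverse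

section Regularity

variable {g h g' g'' : ℝ → ℝ} {a b : ℝ}

theorem eqOn_Icc_of_hasDerivAt_eq (hg : ContinuousOn g (Icc a b)) (hh : ContinuousOn h (Icc a b))
    (hg' : ∀ x ∈ Ioo a b, HasDerivAt g (g' x) x) (hh' : ∀ x ∈ Ioo a b, HasDerivAt h (g' x) x)
    (ha : g a = h a) : EqOn g h (Icc a b) := by
  rintro x ⟨hax, hxb⟩
  rcases hax.eq_or_lt with rfl | hax
  · exact ha
  obtain ⟨y, -, hy⟩ := exists_hasDerivAt_eq_slope (fun z => g z - h z) (fun z => g' z - g' z) hax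
    ((hg.sub hh).mono (Icc_subset_Icc_right hxb))
    fun z hz => (hg' z ⟨hz.1, hz.2.trans_le hxb⟩).sub (hh' z ⟨hz.1, hz.2.trans_le hxb⟩)
  rw [sub_self, eq_comm, div_eq_zero_iff, or_iff_left (sub_pos.2 hax).ne'] at hy
  linarith

theorem forall_pos_of_hasDerivAt_ne_zero (hab : a < b) (hg : ContinuousOn g (Icc a b))
    (hg' : ∀ x ∈ Ioo a b, HasDerivAt g (g' x) x) (hne : ∀ x ∈ Ioo a b, g' x ≠ 0)
    (hlt : g a < g b) : ∀ x ∈ Ioo a b, 0 < g' x := by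
  obtain ⟨y, hy, hslope⟩ := exists_hasDerivAt_eq_slope g g' hab hg hg'
  have hy_pos : 0 < g' y := hslope ▸ div_pos (sub_pos.2 hlt) (sub_pos.2 hab)
  exact (hasDerivWithinAt_forall_lt_or_forall_gt_of_forall_ne (convex_Ioo a b)
    (fun x hx => (hg' x hx).hasDerivWithinAt) hne).resolve_left fun hneg =>
      (hneg y hy).not_gt hy_pos

theorem strictMonoOn_Icc_of_hasDerivAt_pos (hg : ContinuousOn g (Icc a b))
    (hg' : ∀ x ∈ Ioo a b, HasDerivAt g (g' x) x) (hpos : ∀ x ∈ Ioo a b, 0 < g' x) :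
    StrictMonoOn g (Icc a b) := by
  rw [← interior_Icc] at hg' hpos
  exact strictMonoOn_of_hasDerivWithinAt_pos (convex_Icc a b) hg
    (fun x hx => (hg' x hx).hasDerivWithinAt) hpos

theorem hasDerivWithinAt_Icc_of_continuousOn (hab : a < b) (hg : ContinuousOn g (Icc a b))
    (hg' : ∀ x ∈ Ioo a b, HasDerivAt g (g' x) x) (hg'_cont : ContinuousOn g' (Icc a b)) :
    ∀ x ∈ Icc a b, HasDerivWithinAt g (g' x) (Icc a b) x := by
  have hclosure : closure (Ioo a b) = Icc a b := closure_Ioo hab.ne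
  intro x hx
  have hlim : Filter.Tendsto (fderiv ℝ g) (𝓝[Ioo a b] x)
      (𝓝 (ContinuousLinearMap.toSpanSingleton ℝ (g' x))) := by
    refine (((ContinuousLinearMap.toSpanSingletonCLE (𝕜 := ℝ)).continuous.tendsto (g' x)).comp
      ((hg'_cont x hx).mono Ioo_subset_Icc_self)).congr' ?_
    filter_upwards [self_mem_nhdsWithin] with y hy
    exact (hg' y hy).hasFDerivAt.fderiv.symm
  rw [← hclosure]
  exact hasFDerivWithinAt_closure_of_tendsto_fderiv
    (fun y hy => (hg' y hy).differentiableAt.differentiableWithinAt) (convex_Ioo a b) isOpen_Ioo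
    (fun y hy => (hg y (hclosure ▸ hy)).mono Ioo_subset_Icc_self) hlim

theorem contDiffOn_one_Icc_of_hasDerivAt (hab : a < b) (hg : ContinuousOn g (Icc a b))
    (hg' : ∀ x ∈ Ioo a b, HasDerivAt g (g' x) x) (hg'_cont : ContinuousOn g' (Icc a b)) :
    ContDiffOn ℝ 1 g (Icc a b) := by
  have huniq := uniqueDiffOn_Icc hab
  have hderiv := hasDerivWithinAt_Icc_of_continuousOn hab hg hg' hg'_cont
  rw [contDiffOn_one_iff_derivWithin huniq]
  exact ⟨fun x hx => (hderiv x hx).differentiableWithinAt,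
    hg'_cont.congr fun x hx => (hderiv x hx).derivWithin (huniq x hx)⟩

theorem hasDerivAt_deriv_of_isOpen {s : Set ℝ} (hs : IsOpen s)
    (hg' : ∀ x ∈ s, HasDerivAt g (g' x) x) (hg'' : ∀ x ∈ s, HasDerivAt g' (g'' x) x) :
    ∀ x ∈ s, HasDerivAt (deriv g) (g'' x) x := fun x hx =>
  (hg'' x hx).congr_of_eventuallyEq
    (Filter.eventually_of_mem (hs.mem_nhds hx) fun y hy => (hg' y hy).deriv)

theorem contDiffOn_two_of_hasDerivAt {s : Set ℝ} (hs : IsOpen s)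
    (hg' : ∀ x ∈ s, HasDerivAt g (g' x) x) (hg'' : ∀ x ∈ s, HasDerivAt g' (g'' x) x)
    (hg''_cont : ContinuousOn g'' s) : ContDiffOn ℝ 2 g s := by
  have hderiv : ContDiffOn ℝ 1 (deriv g) s := by
    rw [contDiffOn_one_iff_derivWithin hs.uniqueDiffOn]
    have h := hasDerivAt_deriv_of_isOpen hs hg' hg''
    exact ⟨fun x hx => (h x hx).differentiableAt.differentiableWithinAt,
      hg''_cont.congr fun x hx => (h x hx).hasDerivWithinAt.derivWithin (hs.uniqueDiffWithinAt hx)⟩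
  rw [← one_add_one_eq_two, contDiffOn_succ_iff_deriv_of_isOpen hs]
  exact ⟨fun x hx => (hg' x hx).differentiableAt.differentiableWithinAt, by simp, hderiv⟩

end Regularity

/-- `E` is admissible as the squared speed `φ'² = E(φ)` of a motion from `0` to `Q`: it is
continuous, it does not vanish in between, and the travel time `∫₀^Q du / √E(u)` is finite. -/
structure FiniteTransit (E : ℝ → ℝ) (Q : ℝ) : Prop where
  continuousOn : ContinuousOn E (Icc 0 Q)
  pos : ∀ s ∈ Ioo 0 Q, 0 < E s
  intervalIntegrable : IntervalIntegrable (fun s => (√(E s))⁻¹) volume 0 Q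

/-- The time map: the time at which the motion with squared speed `φ'² = E(φ)` and `φ(0) = 0`
reaches `s`. -/
def timeMap (E : ℝ → ℝ) (s : ℝ) : ℝ := ∫ u in (0 : ℝ)..s, (√(E u))⁻¹

theorem timeMap_zero (E : ℝ → ℝ) : timeMap E 0 = 0 := intervalIntegral.integral_same

namespace FiniteTransit

variable {E : ℝ → ℝ} {Q c d : ℝ}

theorem continuousOn_inv_sqrt (hE : FiniteTransit E Q) :
    ContinuousOn (fun s => (√(E s))⁻¹) (Ioo 0 Q) :=
  (hE.continuousOn.mono Ioo_subset_Icc_self).sqrt.inv₀ fun s hs => (sqrt_pos.2 (hE.pos s hs)).ne'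

theorem continuousOn_timeMap (hE : FiniteTransit E Q) (hQ : 0 ≤ Q) :
    ContinuousOn (timeMap E) (Icc 0 Q) := by
  rw [← uIcc_of_le hQ]
  exact intervalIntegral.continuousOn_primitive_interval' hE.intervalIntegrable left_mem_uIcc

theorem hasDerivAt_timeMap (hE : FiniteTransit E Q) {s : ℝ} (hs : s ∈ Ioo 0 Q) :
    HasDerivAt (timeMap E) (√(E s))⁻¹ s := by
  have hint : IntervalIntegrable (fun u => (√(E u))⁻¹) volume 0 s :=
    hE.intervalIntegrable.mono_set
      (uIcc_subset_uIcc_left (Icc_subset_uIcc (Ioo_subset_Icc_self hs)))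
  exact intervalIntegral.integral_hasDerivAt_right hint
    (hE.continuousOn_inv_sqrt.stronglyMeasurableAtFilter isOpen_Ioo s hs)
    (hE.continuousOn_inv_sqrt.continuousAt (isOpen_Ioo.mem_nhds hs))

theorem inv_sqrt_pos (hE : FiniteTransit E Q) {s : ℝ} (hs : s ∈ Ioo 0 Q) : 0 < (√(E s))⁻¹ :=
  inv_pos.2 (sqrt_pos.2 (hE.pos s hs))

theorem strictMonoOn_timeMap (hE : FiniteTransit E Q) (hQ : 0 ≤ Q) :
    StrictMonoOn (timeMap E) (Icc 0 Q) :=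
  strictMonoOn_Icc_of_hasDerivAt_pos (hE.continuousOn_timeMap hQ)
    (fun _ hs => hE.hasDerivAt_timeMap hs) fun _ hs => hE.inv_sqrt_pos hs

theorem timeMap_eq_of_hasDerivAt (hE : FiniteTransit E Q) (hQ : 0 ≤ Q) {φ : ℝ → ℝ}
    (hφ : ContinuousOn φ (Icc 0 d)) (hmaps : MapsTo φ (Icc 0 d) (Icc 0 Q))
    (hmaps' : MapsTo φ (Ioo 0 d) (Ioo 0 Q)) (hφ0 : φ 0 = 0)
    (hφ' : ∀ x ∈ Ioo 0 d, HasDerivAt φ (√(E (φ x))) x) {x : ℝ} (hx : x ∈ Icc 0 d) :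
    timeMap E (φ x) = x := by
  refine eqOn_Icc_of_hasDerivAt_eq (g := timeMap E ∘ φ) (h := id) (g' := fun _ => 1)
    ((hE.continuousOn_timeMap hQ).comp hφ hmaps) continuousOn_id (fun y hy => ?_)
    (fun y _ => hasDerivAt_id y) (by simp [hφ0, timeMap_zero]) hx
  have hspeed : √(E (φ y)) ≠ 0 := (sqrt_pos.2 (hE.pos _ (hmaps' hy))).ne'
  simpa [hspeed] using (hE.hasDerivAt_timeMap (hmaps' hy)).comp y (hφ' y hy)

theorem inv_sqrt_add_le (hE : FiniteTransit E Q) (hc : 0 ≤ c) {s : ℝ} (hs : s ∈ Ioo 0 Q) :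
    (√(E s + c))⁻¹ ≤ (√(E s))⁻¹ :=
  inv_anti₀ (sqrt_pos.2 (hE.pos s hs)) (sqrt_le_sqrt (by linarith))

theorem add_const (hE : FiniteTransit E Q) (hQ : 0 ≤ Q) (hc : 0 ≤ c) :
    FiniteTransit (fun s => E s + c) Q where
  continuousOn := hE.continuousOn.add continuousOn_const
  pos s hs := add_pos_of_pos_of_nonneg (hE.pos s hs) hc
  intervalIntegrable := by
    have hcont : ContinuousOn (fun s => (√(E s + c))⁻¹) (Ioo 0 Q) :=
      ((hE.continuousOn.mono Ioo_subset_Icc_self).add continuousOn_const).sqrt.inv₀ fun s hs =>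
        (sqrt_pos.2 (add_pos_of_pos_of_nonneg (hE.pos s hs) hc)).ne'
    have hint := hE.intervalIntegrable
    rw [intervalIntegrable_iff_integrableOn_Ioo_of_le hQ] at hint ⊢
    refine hint.mono' (hcont.aestronglyMeasurable measurableSet_Ioo)
      (ae_restrict_of_forall_mem measurableSet_Ioo fun s hs => ?_)
    rw [norm_of_nonneg (by positivity)]
    exact hE.inv_sqrt_add_le hc hs

theorem strictAntiOn_timeMap_add_const (hE : FiniteTransit E Q) (hQ : 0 < Q) :
    StrictAntiOn (fun c => timeMap (fun s => E s + c) Q) (Ici 0) := by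
  intro c hc e he hce
  have hEc := hE.add_const hQ.le hc
  have hEe := hE.add_const hQ.le he
  rw [← sub_pos]
  refine (intervalIntegral.intervalIntegral_pos_of_pos_on
    (hEc.intervalIntegrable.sub hEe.intervalIntegrable) (fun s hs => sub_pos.2 ?_) hQ).trans_eq
    (intervalIntegral.integral_sub hEc.intervalIntegrable hEe.intervalIntegrable)
  exact inv_strictAnti₀ (sqrt_pos.2 (hEc.pos s hs)) (sqrt_lt_sqrt (hEc.pos s hs).le (by linarith))

theorem continuousOn_timeMap_add_const (hE : FiniteTransit E Q) (hQ : 0 ≤ Q) :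
    ContinuousOn (fun c => timeMap (fun s => E s + c) Q) (Ici 0) := by
  have hIoo : ∀ᵐ s : ℝ, s ∈ uIoc 0 Q → s ∈ Ioo 0 Q := by
    rw [uIoc_of_le hQ]
    filter_upwards [Measure.ae_ne volume Q] with s hsQ hs
    exact ⟨hs.1, hs.2.lt_of_ne hsQ⟩
  intro c hc
  refine intervalIntegral.continuousWithinAt_of_dominated_interval
    (bound := fun s => (√(E s))⁻¹) ?_ ?_ hE.intervalIntegrable ?_
  · filter_upwards [self_mem_nhdsWithin] with e he
    exact (hE.add_const hQ he).intervalIntegrable.def'.aestronglyMeasurable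
  · filter_upwards [self_mem_nhdsWithin] with e he
    filter_upwards [hIoo] with s hs hs'
    rw [norm_of_nonneg (by positivity)]
    exact hE.inv_sqrt_add_le he (hs hs')
  · filter_upwards [hIoo] with s hs hs'
    have hpos := (hE.add_const hQ hc).pos s (hs hs')
    exact ((continuousAt_const.add continuousAt_id).sqrt.inv₀
      (sqrt_pos.2 hpos).ne').continuousWithinAt

theorem timeMap_add_const_le (hE : FiniteTransit E Q) (hQ : 0 < Q) (hd : 0 < d) :
    timeMap (fun s => E s + (Q / d) ^ 2) Q ≤ d := by
  calc timeMap (fun s => E s + (Q / d) ^ 2) Q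
    _ ≤ ∫ _ in (0 : ℝ)..Q, (Q / d)⁻¹ := by
        refine intervalIntegral.integral_mono_on_of_le_Ioo hQ.le
          (hE.add_const hQ.le (sq_nonneg _)).intervalIntegrable intervalIntegrable_const
          fun s hs => inv_anti₀ (div_pos hQ hd) (le_sqrt_of_sq_le ?_)
        linarith [hE.pos s hs]
    _ = d := by
        rw [intervalIntegral.integral_const, smul_eq_mul]
        field_simp
        ring

theorem exists_timeMap_add_const_eq (hE : FiniteTransit E Q) (hQ : 0 < Q)
    (hd : d ∈ Ioc 0 (timeMap E Q)) : ∃ c, 0 ≤ c ∧ timeMap (fun s => E s + c) Q = d := by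
  obtain ⟨c, hc, hcd⟩ := intermediate_value_Icc' (sq_nonneg (Q / d))
    ((hE.continuousOn_timeMap_add_const hQ.le).mono Icc_subset_Ici_self)
    ⟨hE.timeMap_add_const_le hQ hd.1, by simpa using hd.2⟩
  exact ⟨c, hc.1, hcd⟩

end FiniteTransit

section Existence

variable {E f φ : ℝ → ℝ} {Q : ℝ}

theorem FiniteTransit.hasDerivAt_of_leftInvOn_timeMap (hE : FiniteTransit E Q) (hQ : 0 ≤ Q)
    (hφ : LeftInvOn φ (timeMap E) (Icc 0 Q)) {x : ℝ} (hx : x ∈ Ioo 0 (timeMap E Q)) :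
    HasDerivAt φ (√(E (φ x))) x := by
  rw [← timeMap_zero E] at hx
  simpa using hasDerivAt_of_leftInvOn_Icc hQ (hE.continuousOn_timeMap hQ)
    (fun s hs => hE.hasDerivAt_timeMap hs) (fun s hs => (hE.inv_sqrt_pos hs).ne') hφ hx

theorem hasDerivAt_sqrt_comp {x : ℝ} (hE : HasDerivAt E (2 * f (φ x)) (φ x)) (hpos : 0 < E (φ x))
    (hφ : HasDerivAt φ (√(E (φ x))) x) : HasDerivAt (fun y => √(E (φ y))) (f (φ x)) x := by
  have hspeed : √(E (φ x)) ≠ 0 := (sqrt_pos.2 hpos).ne'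
  refine ((hE.comp x hφ).sqrt hpos.ne').congr_deriv ?_
  simp only [Function.comp_apply]
  field_simp

theorem FiniteTransit.isBVPSol_of_leftInvOn_timeMap (hE : FiniteTransit E Q) (hQ : 0 < Q)
    (hf : ContinuousOn f (Ioo 0 Q)) (hE' : ∀ s ∈ Ioo 0 Q, HasDerivAt E (2 * f s) s)
    (hφ : LeftInvOn φ (timeMap E) (Icc 0 Q)) : IsBVPSol Q f (timeMap E Q) φ := by
  have hT := hE.continuousOn_timeMap hQ.le
  have h0 : (0 : ℝ) ∈ Icc 0 Q := left_mem_Icc.2 hQ.le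
  have hQmem : Q ∈ Icc 0 Q := right_mem_Icc.2 hQ.le
  have hd : 0 < timeMap E Q := by
    simpa only [timeMap_zero] using hE.strictMonoOn_timeMap hQ.le h0 hQmem hQ
  have hφ0 : φ 0 = 0 := by simpa [timeMap_zero] using hφ h0
  have hφQ : φ (timeMap E Q) = Q := hφ hQmem
  have hcont : ContinuousOn φ (Icc 0 (timeMap E Q)) := by
    simpa [timeMap_zero] using continuousOn_Icc_of_leftInvOn hQ.le hT hφ
  have hmaps : MapsTo φ (Ioo 0 (timeMap E Q)) (Ioo 0 Q) := by
    simpa [timeMap_zero] using mapsTo_Ioo_of_leftInvOn hQ.le hT hφ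
  have hmaps' : MapsTo φ (Icc 0 (timeMap E Q)) (Icc 0 Q) := by
    rw [← closure_Ioo hd.ne] at hcont ⊢
    rw [← closure_Ioo hQ.ne]
    exact hmaps.closure_of_continuousOn hcont
  have hφ' : ∀ x ∈ Ioo 0 (timeMap E Q), HasDerivAt φ (√(E (φ x))) x := fun x hx =>
    hE.hasDerivAt_of_leftInvOn_timeMap hQ.le hφ hx
  have hφ'' : ∀ x ∈ Ioo 0 (timeMap E Q), HasDerivAt (fun y => √(E (φ y))) (f (φ x)) x :=
    fun x hx => hasDerivAt_sqrt_comp (hE' _ (hmaps hx)) (hE.pos _ (hmaps hx)) (hφ' x hx)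
  exact ⟨contDiffOn_one_Icc_of_hasDerivAt hd hcont hφ' (hE.continuousOn.comp hcont hmaps').sqrt,
    contDiffOn_two_of_hasDerivAt isOpen_Ioo hφ' hφ''
      (hf.comp (hcont.mono Ioo_subset_Icc_self) hmaps),
    fun x hx => (hasDerivAt_deriv_of_isOpen isOpen_Ioo hφ' hφ'' x hx).deriv, hφ0, hφQ, hmaps⟩

end Existence

namespace IsBVPSol

variable {E f φ ψ : ℝ → ℝ} {Q d x : ℝ}

theorem continuousOn (hφ : IsBVPSol Q f d φ) : ContinuousOn φ (Icc 0 d) := hφ.1.continuousOn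

theorem map_zero (hφ : IsBVPSol Q f d φ) : φ 0 = 0 := hφ.2.2.2.1

theorem map_right (hφ : IsBVPSol Q f d φ) : φ d = Q := hφ.2.2.2.2.1

theorem mapsTo_Ioo (hφ : IsBVPSol Q f d φ) : MapsTo φ (Ioo 0 d) (Ioo 0 Q) := hφ.2.2.2.2.2

theorem mapsTo_Icc (hφ : IsBVPSol Q f d φ) (hQ : 0 ≤ Q) : MapsTo φ (Icc 0 d) (Icc 0 Q) := by
  rintro x ⟨hx0, hxd⟩
  rcases hx0.eq_or_lt with rfl | hx0
  · rw [hφ.map_zero]; exact left_mem_Icc.2 hQ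
  rcases hxd.eq_or_lt with rfl | hxd
  · rw [hφ.map_right]; exact right_mem_Icc.2 hQ
  · exact Ioo_subset_Icc_self (hφ.mapsTo_Ioo ⟨hx0, hxd⟩)

theorem hasDerivAt (hφ : IsBVPSol Q f d φ) (hx : x ∈ Ioo 0 d) : HasDerivAt φ (deriv φ x) x :=
  ((hφ.2.1.differentiableOn two_ne_zero).differentiableAt (isOpen_Ioo.mem_nhds hx)).hasDerivAt

theorem hasDerivAt_deriv (hφ : IsBVPSol Q f d φ) (hx : x ∈ Ioo 0 d) :
    HasDerivAt (deriv φ) (f (φ x)) x := by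
  obtain ⟨-, hC2, hode, -⟩ := hφ
  rw [← one_add_one_eq_two, contDiffOn_succ_iff_deriv_of_isOpen isOpen_Ioo] at hC2
  rw [← hode x hx]
  exact ((hC2.2.2.differentiableOn one_ne_zero).differentiableAt
    (isOpen_Ioo.mem_nhds hx)).hasDerivAt

theorem sq_deriv_sub_eq (hφ : IsBVPSol Q f d φ) (hd : 0 < d) (hQ : 0 ≤ Q)
    (hE : ContinuousOn E (Icc 0 Q)) (hE' : ∀ s ∈ Ioo 0 Q, HasDerivAt E (2 * f s) s)
    (hx : x ∈ Ioo 0 d) :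
    deriv φ x ^ 2 - E (φ x) = derivWithin φ (Icc 0 d) 0 ^ 2 - E 0 := by
  have hp : ∀ y ∈ Ioo 0 d, derivWithin φ (Icc 0 d) y = deriv φ y := fun y hy =>
    derivWithin_of_mem_nhds (Icc_mem_nhds hy.1 hy.2)
  have hp_cont : ContinuousOn (derivWithin φ (Icc 0 d)) (Icc 0 d) :=
    hφ.1.continuousOn_derivWithin (uniqueDiffOn_Icc hd) le_rfl
  have hconst := eqOn_Icc_of_hasDerivAt_eq (g' := fun _ => 0)
    (g := fun y => derivWithin φ (Icc 0 d) y ^ 2 - E (φ y))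
    ((hp_cont.pow 2).sub (hE.comp hφ.continuousOn (hφ.mapsTo_Icc hQ))) continuousOn_const
    (fun y hy => ?_) (fun y _ => hasDerivAt_const y _) rfl (Ioo_subset_Icc_self hx)
  · simpa only [hp x hx, hφ.map_zero] using hconst
  · have hderiv : HasDerivAt (fun z => deriv φ z ^ 2 - E (φ z)) 0 y := by
      refine (((hφ.hasDerivAt_deriv hy).fun_pow 2).fun_sub
        ((hE' _ (hφ.mapsTo_Ioo hy)).comp y (hφ.hasDerivAt hy))).congr_deriv ?_
      ring
    refine hderiv.congr_of_eventuallyEq ?_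
    filter_upwards [isOpen_Ioo.mem_nhds hy] with z hz
    rw [hp z hz]

theorem exists_sq_deriv_eq_add (hφ : IsBVPSol Q f d φ) (hd : 0 < d) (hQ : 0 ≤ Q)
    (hE : ContinuousOn E (Icc 0 Q)) (hE' : ∀ s ∈ Ioo 0 Q, HasDerivAt E (2 * f s) s)
    (hE0 : E 0 = 0) : ∃ c, 0 ≤ c ∧ ∀ x ∈ Ioo 0 d, deriv φ x ^ 2 = E (φ x) + c :=
  ⟨derivWithin φ (Icc 0 d) 0 ^ 2, sq_nonneg _, fun x hx => by
    linarith [hφ.sq_deriv_sub_eq hd hQ hE hE' hx]⟩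

theorem deriv_pos (hφ : IsBVPSol Q f d φ) (hd : 0 < d) (hQ : 0 < Q)
    (hE : FiniteTransit E Q) (hE' : ∀ s ∈ Ioo 0 Q, HasDerivAt E (2 * f s) s) (hE0 : E 0 = 0) :
    ∀ x ∈ Ioo 0 d, 0 < deriv φ x := by
  obtain ⟨c, hc, hsq⟩ := hφ.exists_sq_deriv_eq_add hd hQ.le hE.continuousOn hE' hE0
  have hne : ∀ x ∈ Ioo 0 d, deriv φ x ≠ 0 := fun x hx => by
    rw [← sq_pos_iff, hsq x hx]
    exact add_pos_of_pos_of_nonneg (hE.pos _ (hφ.mapsTo_Ioo hx)) hc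
  have hlt : φ 0 < φ d := by rwa [hφ.map_zero, hφ.map_right]
  exact forall_pos_of_hasDerivAt_ne_zero hd hφ.continuousOn (fun x hx => hφ.hasDerivAt hx) hne hlt

theorem exists_timeMap_add_const_eq (hφ : IsBVPSol Q f d φ) (hd : 0 < d) (hQ : 0 < Q)
    (hE : FiniteTransit E Q) (hE' : ∀ s ∈ Ioo 0 Q, HasDerivAt E (2 * f s) s) (hE0 : E 0 = 0) :
    ∃ c, 0 ≤ c ∧ ∀ x ∈ Icc 0 d, timeMap (fun s => E s + c) (φ x) = x := by
  obtain ⟨c, hc, hsq⟩ := hφ.exists_sq_deriv_eq_add hd hQ.le hE.continuousOn hE' hE0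
  refine ⟨c, hc, fun x hx => (hE.add_const hQ.le hc).timeMap_eq_of_hasDerivAt hQ.le
    hφ.continuousOn (hφ.mapsTo_Icc hQ.le) hφ.mapsTo_Ioo hφ.map_zero (fun y hy => ?_) hx⟩
  rw [← hsq y hy, sqrt_sq (hφ.deriv_pos hd hQ hE hE' hE0 y hy).le]
  exact hφ.hasDerivAt hy

theorem eqOn (hφ : IsBVPSol Q f d φ) (hψ : IsBVPSol Q f d ψ) (hd : 0 < d) (hQ : 0 < Q)
    (hE : FiniteTransit E Q) (hE' : ∀ s ∈ Ioo 0 Q, HasDerivAt E (2 * f s) s) (hE0 : E 0 = 0) :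
    EqOn φ ψ (Icc 0 d) := by
  obtain ⟨c, hc, hφc⟩ := hφ.exists_timeMap_add_const_eq hd hQ hE hE' hE0
  obtain ⟨e, he, hψe⟩ := hψ.exists_timeMap_add_const_eq hd hQ hE hE' hE0
  have hd_mem : d ∈ Icc 0 d := right_mem_Icc.2 hd.le
  have hce : c = e := by
    refine (hE.strictAntiOn_timeMap_add_const hQ).injOn hc he ?_
    have hTc := hφc d hd_mem
    have hTe := hψe d hd_mem
    rw [hφ.map_right] at hTc
    rw [hψ.map_right] at hTe
    exact hTc.trans hTe.symm
  subst hce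
  intro x hx
  exact ((hE.add_const hQ.le hc).strictMonoOn_timeMap hQ.le).injOn (hφ.mapsTo_Icc hQ.le hx)
    (hψ.mapsTo_Icc hQ.le hx) ((hφc x hx).trans (hψe x hx).symm)

end IsBVPSol

theorem FiniteTransit.exists_isBVPSol {Q : ℝ} {f E : ℝ → ℝ} (hE : FiniteTransit E Q) (hQ : 0 < Q)
    (hf : ContinuousOn f (Ioo 0 Q)) (hE' : ∀ s ∈ Ioo 0 Q, HasDerivAt E (2 * f s) s) {d : ℝ}
    (hd : d ∈ Ioc 0 (timeMap E Q)) : ∃ φ, IsBVPSol Q f d φ := by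
  obtain ⟨c, hc, rfl⟩ := hE.exists_timeMap_add_const_eq hQ hd
  have hEc := hE.add_const hQ.le hc
  exact ⟨_, hEc.isBVPSol_of_leftInvOn_timeMap hQ hf (fun s hs => (hE' s hs).add_const c)
    (hEc.strictMonoOn_timeMap hQ.le).injOn.leftInvOn_invFunOn⟩

/-- A profile rising from `g 0 = 0` to `g L`: `g` is `C¹` on `[0, L]` with derivative `g'`, which is
positive in the interior. The derivative is carried along because `deriv g` is meaningless at the
endpoints of `[0, L]`. -/
structure IsRisingProfile (g g' : ℝ → ℝ) (L : ℝ) : Prop where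
  length_pos : 0 < L
  map_zero : g 0 = 0
  continuousOn : ContinuousOn g (Icc 0 L)
  hasDerivAt : ∀ t ∈ Ioo 0 L, HasDerivAt g (g' t) t
  continuousOn_deriv : ContinuousOn g' (Icc 0 L)
  deriv_pos : ∀ t ∈ Ioo 0 L, 0 < g' t

namespace IsRisingProfile

variable {f g g' κ : ℝ → ℝ} {L : ℝ}

theorem strictMonoOn (hg : IsRisingProfile g g' L) : StrictMonoOn g (Icc 0 L) :=
  strictMonoOn_Icc_of_hasDerivAt_pos hg.continuousOn hg.hasDerivAt hg.deriv_pos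

theorem map_length_pos (hg : IsRisingProfile g g' L) : 0 < g L := by
  have hL := hg.length_pos
  simpa only [hg.map_zero] using
    hg.strictMonoOn (left_mem_Icc.2 hL.le) (right_mem_Icc.2 hL.le) hL

theorem mapsTo_leftInv (hg : IsRisingProfile g g' L) (hκ : LeftInvOn κ g (Icc 0 L)) :
    MapsTo κ (Ioo 0 (g L)) (Ioo 0 L) := by
  simpa only [hg.map_zero] using mapsTo_Ioo_of_leftInvOn hg.length_pos.le hg.continuousOn hκ

theorem map_leftInv (hg : IsRisingProfile g g' L) (hκ : LeftInvOn κ g (Icc 0 L)) {s : ℝ}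
    (hs : s ∈ Icc 0 (g L)) : g (κ s) = s :=
  rightInvOn_Icc_of_leftInvOn hg.length_pos.le hg.continuousOn hκ (by rwa [hg.map_zero])

theorem continuousOn_leftInv (hg : IsRisingProfile g g' L) (hκ : LeftInvOn κ g (Icc 0 L)) :
    ContinuousOn κ (Icc 0 (g L)) := by
  simpa only [hg.map_zero] using continuousOn_Icc_of_leftInvOn hg.length_pos.le hg.continuousOn hκ

theorem hasDerivAt_leftInv (hg : IsRisingProfile g g' L) (hκ : LeftInvOn κ g (Icc 0 L)) {s : ℝ}
    (hs : s ∈ Ioo 0 (g L)) : HasDerivAt κ (g' (κ s))⁻¹ s :=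
  hasDerivAt_of_leftInvOn_Icc hg.length_pos.le hg.continuousOn hg.hasDerivAt
    (fun t ht => (hg.deriv_pos t ht).ne') hκ (by rwa [hg.map_zero])

theorem finiteTransit_sq_deriv_leftInv (hg : IsRisingProfile g g' L)
    (hκ : LeftInvOn κ g (Icc 0 L)) : FiniteTransit (fun s => g' (κ s) ^ 2) (g L) where
  continuousOn := by
    have hmaps : MapsTo κ (Icc 0 (g L)) (Icc 0 L) := by
      have h := (hg.mapsTo_leftInv hκ).closure_of_continuousOn
      rw [closure_Ioo hg.map_length_pos.ne, closure_Ioo hg.length_pos.ne] at h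
      exact h (hg.continuousOn_leftInv hκ)
    exact (hg.continuousOn_deriv.comp (hg.continuousOn_leftInv hκ) hmaps).pow 2
  pos s hs := pow_pos (hg.deriv_pos _ (hg.mapsTo_leftInv hκ hs)) 2
  intervalIntegrable := by
    have hQ := hg.map_length_pos.le
    refine intervalIntegral.intervalIntegrable_deriv_of_nonneg (g := κ)
      (by simpa only [uIcc_of_le hQ] using hg.continuousOn_leftInv hκ) (fun s hs => ?_)
      fun s _ => by positivity
    rw [min_eq_left hQ, max_eq_right hQ] at hs
    rw [sqrt_sq (hg.deriv_pos _ (hg.mapsTo_leftInv hκ hs)).le]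
    exact hg.hasDerivAt_leftInv hκ hs

theorem timeMap_sq_deriv_leftInv (hg : IsRisingProfile g g' L) (hκ : LeftInvOn κ g (Icc 0 L)) :
    timeMap (fun s => g' (κ s) ^ 2) (g L) = L := by
  have hL := hg.length_pos.le
  refine (hg.finiteTransit_sq_deriv_leftInv hκ).timeMap_eq_of_hasDerivAt hg.map_length_pos.le
    hg.continuousOn (by simpa only [hg.map_zero] using hg.strictMonoOn.monotoneOn.mapsTo_Icc)
    (by simpa only [hg.map_zero] using hg.strictMonoOn.mapsTo_Ioo) hg.map_zero (fun t ht => ?_)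
    (right_mem_Icc.2 hL)
  rw [hκ (Ioo_subset_Icc_self ht), sqrt_sq (hg.deriv_pos t ht).le]
  exact hg.hasDerivAt t ht

theorem hasDerivAt_sq_deriv_leftInv (hg : IsRisingProfile g g' L) (hκ : LeftInvOn κ g (Icc 0 L))
    (hode : ∀ t ∈ Ioo 0 L, HasDerivAt g' (f (g t)) t) {s : ℝ} (hs : s ∈ Ioo 0 (g L)) :
    HasDerivAt (fun s => g' (κ s) ^ 2) (2 * f s) s := by
  have hκs := hg.mapsTo_leftInv hκ hs
  have hne : g' (κ s) ≠ 0 := (hg.deriv_pos _ hκs).ne'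
  refine (((hode _ hκs).comp s (hg.hasDerivAt_leftInv hκ hs)).fun_pow 2).congr_deriv ?_
  rw [hg.map_leftInv hκ (Ioo_subset_Icc_self hs), Function.comp_apply]
  field_simp
  ring

end IsRisingProfile

theorem stmt9_general {f g g' : ℝ → ℝ} {L : ℝ} (hg : IsRisingProfile g g' L) (hg'0 : g' 0 = 0)
    (hode : ∀ t ∈ Ioo 0 L, HasDerivAt g' (f (g t)) t)
    (hf : ContinuousOn (fun t => f (g t)) (Ioo 0 L)) :
    ∀ d ∈ Ioc 0 L, ∃ φ : ℝ → ℝ, IsBVPSol (g L) f d φ ∧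
      (∀ φ' : ℝ → ℝ, IsBVPSol (g L) f d φ' → EqOn φ' φ (Icc 0 d)) ∧
      (∀ x ∈ Ioo 0 d, 0 < deriv φ x) := by
  intro d hd
  obtain ⟨κ, hκ⟩ : ∃ κ, LeftInvOn κ g (Icc 0 L) := ⟨_, hg.strictMonoOn.injOn.leftInvOn_invFunOn⟩
  have hQ := hg.map_length_pos
  have hE := hg.finiteTransit_sq_deriv_leftInv hκ
  have hE' := fun s hs => hg.hasDerivAt_sq_deriv_leftInv hκ hode (s := s) hs
  have hE0 : g' (κ 0) ^ 2 = 0 := by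
    have hκ0 : κ 0 = 0 := by
      simpa only [hg.map_zero] using hκ (left_mem_Icc.2 hg.length_pos.le)
    rw [hκ0, hg'0, sq, mul_zero]
  have hf_cont : ContinuousOn f (Ioo 0 (g L)) :=
    (hf.comp ((hg.continuousOn_leftInv hκ).mono Ioo_subset_Icc_self) (hg.mapsTo_leftInv hκ)).congr
      fun s hs => by rw [Function.comp_apply, hg.map_leftInv hκ (Ioo_subset_Icc_self hs)]
  obtain ⟨φ, hφ⟩ := hE.exists_isBVPSol hQ hf_cont hE'
    ((hg.timeMap_sq_deriv_leftInv hκ).symm ▸ hd)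
  exact ⟨φ, hφ, fun ψ hψ => hψ.eqOn hφ hd.1 hQ hE hE' hE0, hφ.deriv_pos hd.1 hQ hE hE' hE0⟩

/-- The paper's `φ̄₁` on `[0, 1]`, extended to the line by the same formula. -/
def cubicProfile (Q t : ℝ) : ℝ := Q * (3 * t ^ 2 - 2 * t ^ 3)

theorem cubicProfile_zero (Q : ℝ) : cubicProfile Q 0 = 0 := by simp [cubicProfile]

theorem cubicProfile_one (Q : ℝ) : cubicProfile Q 1 = Q := by norm_num [cubicProfile]

theorem hasDerivAt_cubicProfile (Q t : ℝ) :
    HasDerivAt (cubicProfile Q) (6 * Q * (t * (1 - t))) t := by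
  refine ((((hasDerivAt_pow 2 t).const_mul 3).sub
    ((hasDerivAt_pow 3 t).const_mul 2)).const_mul Q).congr_deriv ?_
  push_cast
  ring

theorem isRisingProfile_cubicProfile {Q : ℝ} (hQ : 0 < Q) :
    IsRisingProfile (cubicProfile Q) (fun t => 6 * Q * (t * (1 - t))) 1 where
  length_pos := one_pos
  map_zero := cubicProfile_zero Q
  continuousOn t _ := (hasDerivAt_cubicProfile Q t).continuousAt.continuousWithinAt
  hasDerivAt t _ := hasDerivAt_cubicProfile Q t
  continuousOn_deriv := by fun_prop
  deriv_pos t ht := mul_pos (by positivity) (mul_pos ht.1 (sub_pos.2 ht.2))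

theorem hasDerivAt_deriv_cubicProfile (Q t : ℝ) :
    HasDerivAt (fun t => 6 * Q * (t * (1 - t))) (6 * Q * (1 - 2 * t)) t := by
  refine (((hasDerivAt_id t).mul ((hasDerivAt_id t).const_sub 1)).const_mul (6 * Q)).congr_deriv ?_
  simp only [id_eq]
  ring

/-- Existence and uniqueness of the one-dimensional solution `φ̄_d` of the boundary
value problem, which moreover has strictly positive derivative on `(0,d)`. -/
theorem stmt9
    (Q : ℝ) (hQ : 0 < Q)
    (κ : ℝ → ℝ) (hκ : ∀ t ∈ Set.Icc (0 : ℝ) 1, κ (Q * (3 * t ^ 2 - 2 * t ^ 3)) = t)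
    (f : ℝ → ℝ) (hf : ∀ s : ℝ, f s = 6 * Q * (1 - 2 * κ s)) :
    ∀ d ∈ Set.Ioc (0 : ℝ) 1, ∃ φ : ℝ → ℝ, IsBVPSol Q f d φ ∧
      (∀ φ' : ℝ → ℝ, IsBVPSol Q f d φ' → Set.EqOn φ' φ (Set.Icc 0 d)) ∧
      (∀ x ∈ Set.Ioo (0 : ℝ) d, 0 < deriv φ x) := by
  have hf_cubic : ∀ t ∈ Ioo (0 : ℝ) 1, f (cubicProfile Q t) = 6 * Q * (1 - 2 * t) := fun t ht => by
    rw [hf, cubicProfile, hκ t (Ioo_subset_Icc_self ht)]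
  have h := stmt9_general (isRisingProfile_cubicProfile hQ) (by ring)
    (fun t ht => hf_cubic t ht ▸ hasDerivAt_deriv_cubicProfile Q t)
    (ContinuousOn.congr (by fun_prop) hf_cubic)
  rwa [cubicProfile_one] at h
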